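/- Let r > 0 be a real number, q ∈ (0,1), Θ ∈ (0,1), and let u be a real number with e^u · q(1-Θ) < 1. For every natural number x, the series ∑_{z=0}^{∞} p_Θ(x, z) · e^{u z} converges and equals ([1-ξ(u)] e^{-u})^r · [1 - Θ ξ(u)]^x, where ξ(u) = (1 - e^u)/(1 - q(1-Θ) e^u). That is, the moment generating function of the transition kernel p_Θ started at x has this closed form. -/

import Mathlib

/-- Transition kernel p_Θ(x, z) = ∑_{y=0}^{min(x,z)}
    Γ(z+r)/((z-y)! Γ(y+r)) · [q(1-Θ)]^{z-y} · [1-q(1-Θ)]^{r+y} · C(x,y) Θ^y (1-Θ)^{x-y}. -/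
noncomputable def pKer (r q Θ : ℝ) (x z : ℕ) : ℝ :=
  ∑ y ∈ Finset.range (min x z + 1),
    Real.Gamma ((z : ℝ) + r) / (((z - y).factorial : ℝ) * Real.Gamma ((y : ℝ) + r)) *
      (q * (1 - Θ)) ^ (z - y) * (1 - q * (1 - Θ)) ^ (r + (y : ℝ)) *
      (x.choose y : ℝ) * Θ ^ y * (1 - Θ) ^ (x - y)

lemma gamma_asc (a : ℝ) (ha : 0 < a) (n : ℕ) :
    Real.Gamma ((n : ℝ) + a) = (ascPochhammer ℝ n).eval a * Real.Gamma a := by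
  induction n with
  | zero => simp
  | succ n ih =>
    have h : ((n + 1 : ℕ) : ℝ) + a = ((n : ℝ) + a) + 1 := by push_cast; ring
    rw [h, Real.Gamma_add_one (by positivity), ih, ascPochhammer_succ_eval]
    ring

lemma negbin_hasSum (a t : ℝ) (ha : 0 < a) (ht : |t| < 1) :
    HasSum (fun n : ℕ => Real.Gamma ((n : ℝ) + a) / ((n.factorial : ℝ) * Real.Gamma a) * t ^ n)
      (((1 - t) ^ a)⁻¹) := by
  have h := (Real.one_div_one_sub_rpow_hasFPowerSeriesOnBall_zero a).hasSum (y := t)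
    (by simpa [enorm_eq_nnnorm] using! ht)
  have hG := (Real.Gamma_pos_of_pos ha).ne'
  convert! h using 1
  · ext n
    have hn : (n.factorial : ℝ) ≠ 0 := by positivity
    have hc : Ring.choose (a + n - 1) n = (n.factorial : ℝ)⁻¹ * (ascPochhammer ℝ n).eval a := by
      rw [Ring.choose_eq_smul, Polynomial.descPochhammer_smeval_eq_ascPochhammer,
        Polynomial.ascPochhammer_smeval_eq_eval, smul_eq_mul]
      congr 2
      ring
    rw [gamma_asc a ha]
    simp [hc]
    field_simp
  · simp

lemma pKer_term_hasSum (r p e : ℝ) (hr : 0 < r) (hp : 0 < p) (hp1 : p < 1) (he : 0 < e)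
    (hu : p * e < 1) (y : ℕ) :
    HasSum (fun z : ℕ => if y ≤ z then
        Real.Gamma ((z : ℝ) + r) / (((z - y).factorial : ℝ) * Real.Gamma ((y : ℝ) + r)) *
          p ^ (z - y) * (1 - p) ^ (r + (y : ℝ)) * e ^ z else 0)
      (((1 - p) / (1 - p * e)) ^ r * (e * ((1 - p) / (1 - p * e))) ^ y) := by
  have h1 : 0 < 1 - p := by linarith
  have h2 : 0 < 1 - p * e := by linarith
  rw [← (add_left_injective y).hasSum_iff]
  · have h := (negbin_hasSum ((y : ℝ) + r) (p * e) (by positivity)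
      (by rw [abs_of_pos (by positivity)]; exact hu)).mul_right ((1 - p) ^ (r + (y : ℝ)) * e ^ y)
    convert! h using 1
    · ext n
      simp only [Function.comp, Nat.le_add_left, if_true, Nat.add_sub_cancel]
      push_cast
      rw [mul_pow, pow_add, add_assoc]
      ring
    · rw [Real.div_rpow h1.le h2.le, Real.rpow_add h2, Real.rpow_add h1, Real.rpow_natCast,
        Real.rpow_natCast, mul_pow, div_pow]
      have := (Real.rpow_pos_of_pos h2 r).ne'
      field_simp
  · intro z hz
    rw [if_neg]
    intro h
    exact hz ⟨z - y, by simp [h]⟩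

/-- Moment generating function of one step of the kernel p_Θ started at x:
    ∑_z p_Θ(x,z) e^{u z} = ([1-ξ(u)] e^{-u})^r [1 - Θ ξ(u)]^x,
    where ξ(u) = (1 - e^u)/(1 - q(1-Θ) e^u), provided e^u q(1-Θ) < 1. -/
theorem pKer_mgf
    (r q Θ u : ℝ) (hr : 0 < r) (hq : q ∈ Set.Ioo (0 : ℝ) 1) (hΘ : Θ ∈ Set.Ioo (0 : ℝ) 1)
    (hu : Real.exp u * (q * (1 - Θ)) < 1) (x : ℕ) :
    HasSum (fun z : ℕ => pKer r q Θ x z * Real.exp (u * z))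
      (((1 - (1 - Real.exp u) / (1 - q * (1 - Θ) * Real.exp u)) * Real.exp (-u)) ^ r *
        (1 - Θ * ((1 - Real.exp u) / (1 - q * (1 - Θ) * Real.exp u))) ^ x) := by
  obtain ⟨hq0, hq1⟩ := hq
  obtain ⟨hT0, hT1⟩ := hΘ
  have hp : 0 < q * (1 - Θ) := mul_pos hq0 (by linarith)
  have hp1 : q * (1 - Θ) < 1 := by nlinarith
  have hexp : ∀ z : ℕ, Real.exp (u * z) = Real.exp u ^ z := fun z => by
    rw [mul_comm, Real.exp_nat_mul]
  have hneg : Real.exp (-u) = (Real.exp u)⁻¹ := Real.exp_neg u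
  simp only [hexp, hneg, pKer]
  have he : 0 < Real.exp u := Real.exp_pos u
  generalize Real.exp u = e at *
  generalize q * (1 - Θ) = p at *
  have h2 : 0 < 1 - p * e := by linarith
  have h3 : 1 - p * e ≠ 0 := h2.ne'
  have h4 : 1 - e * p ≠ 0 := by rwa [mul_comm]
  have h := hasSum_sum (s := Finset.range (x + 1)) (fun y _ =>
    (pKer_term_hasSum r p e hr hp hp1 he (by linarith) y).mul_right
      ((x.choose y : ℝ) * Θ ^ y * (1 - Θ) ^ (x - y)))
  convert! h using 1
  · ext z
    rw [Finset.sum_mul]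
    have hs : Finset.range (min x z + 1) = (Finset.range (x + 1)).filter (fun y => y ≤ z) := by
      ext y
      simp only [Finset.mem_range, Finset.mem_filter]
      omega
    rw [hs, Finset.sum_filter]
    refine Finset.sum_congr rfl fun y _ => ?_
    split_ifs
    · ring
    · simp
  · have e1 : (1 - (1 - e) / (1 - p * e)) * e⁻¹ = (1 - p) / (1 - p * e) := by
      field_simp
      ring
    have e2 : 1 - Θ * ((1 - e) / (1 - p * e)) =
        Θ * (e * ((1 - p) / (1 - p * e))) + (1 - Θ) := by
      field_simp
      ring
    rw [e1, e2, add_pow, Finset.mul_sum]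
    refine Finset.sum_congr rfl fun y _ => ?_
    rw [mul_pow Θ]
    ring
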